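/- (Functoriality, relevance is preserved.) Let A and B be commutative rings graded by the same abelian group M, and let Ψ : A → B be a ring homomorphism respecting the gradings (Ψ(𝒜_m) ⊆ ℬ_m for all m ∈ M). If f = {a_i}_{i∈I} is a relevant family of homogeneous elements of A and each Ψ(a_i) is nonzero as are all images of homogeneous divisors involved (i.e., Ψ maps nonzero homogeneous divisors of the a_i to nonzero elements), then the family Ψ(f) = {Ψ(a_i)}_{i∈I} is a relevant family of homogeneous elements of B. -/

import Mathlib

/-!
Statement 10 (Functoriality, relevance is preserved): if `Ψ : A → B` is a
grading-preserving ring homomorphism between `M`-graded rings which maps the nonzero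
homogeneous divisors of the members of a relevant family `f` to nonzero elements,
then the image family `Ψ ∘ f` is relevant in `B`.
-/

/-- The set of degrees of homogeneous divisors of members of the family `f`. -/
def divisorDegrees {M A I : Type*} [AddCommGroup M] [CommRing A]
    (𝒜 : M → AddSubgroup A) (f : I → A) : Set M :=
  {m | ∃ x : A, x ≠ 0 ∧ x ∈ 𝒜 m ∧ ∃ i, x ∣ f i}

/-- A family `f` of homogeneous elements of an `M`-graded ring is *relevant* if every
`x ∈ M` has a positive multiple lying in the subgroup of `M` generated by the degrees
of the homogeneous divisors of members of `f`. -/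
def IsRelevant {M A I : Type*} [AddCommGroup M] [CommRing A]
    (𝒜 : M → AddSubgroup A) (f : I → A) : Prop :=
  ∀ x : M, ∃ n : ℕ, 0 < n ∧ n • x ∈ AddSubgroup.closure (divisorDegrees 𝒜 f)

theorem isRelevant_map_of_isRelevant
    {M A B I : Type*} [AddCommGroup M] [DecidableEq M] [CommRing A] [CommRing B]
    (𝒜 : M → AddSubgroup A) [GradedRing 𝒜]
    (ℬ : M → AddSubgroup B) [GradedRing ℬ]
    (Ψ : A →+* B) (hΨ : ∀ m, ∀ a ∈ 𝒜 m, Ψ a ∈ ℬ m)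
    (f : I → A)
    (hf : ∀ i, f i ≠ 0 ∧ ∃ m, f i ∈ 𝒜 m)
    (hrel : IsRelevant 𝒜 f)
    (hΨ0 : ∀ x : A, x ≠ 0 → (∃ m, x ∈ 𝒜 m) → (∃ i, x ∣ f i) → Ψ x ≠ 0) :
    IsRelevant ℬ (fun i => Ψ (f i)) := by
  intro x
  obtain ⟨n, hn, hx⟩ := hrel x
  refine ⟨n, hn, AddSubgroup.closure_mono ?_ hx⟩
  rintro m ⟨y, hy0, hym, i, hyi⟩
  exact ⟨Ψ y, hΨ0 y hy0 ⟨m, hym⟩ ⟨i, hyi⟩, hΨ m y hym, i, map_dvd Ψ hyi⟩
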